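/- Let A be a linear relation in a complex vector space H. Then for every λ ∈ ℂ one has R_c(A) = R_λ(A) ∩ R_∞(A). -/

import Mathlib

/-!
The heart of the matter is `R_0(A) ∩ R_∞(A) ⊆ R_λ(A)`. A vector `x` on the left is a term `z n` of
a chain `z : ℕ → H` with `(z k, z (k+1)) ∈ A`, `z 0 = 0` and `z k = 0` for `k ≥ N`. Evaluate
polynomials on the chain by the linear map `φ` with `φ (X ^ k) = z k`. Then `(φ p, φ (X p)) ∈ A`,
and since `φ` kills constants, `(φ p, φ ((X - λ) p + c)) ∈ A - λ` for every constant `c`. Hence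
`φ ((X - λ) ^ i p + r) ∈ R_λ(A)` with `deg r < i` forces `φ p ∈ R_λ(A)`
(`mem_of_pow_mul_add_mem`). Take `p = X ^ n`, `i = N` and let `-r` be the remainder of
`(X - λ) ^ N X ^ n` modulo `X ^ N`: the polynomial `(X - λ) ^ N X ^ n + r` is divisible by `X ^ N`,
so `φ` kills it, and `x = φ (X ^ n) ∈ R_λ(A)`.

The other inclusion is the same fact applied to `A - λ` and `-λ`, because `mul Aⁿ ⊆ mul (A - λ)ⁿ`
(`mul_pow_le_shift`).
-/


open Submodule Set

variable {H : Type*} [AddCommGroup H] [Module ℂ H]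

/-- A linear relation in `H`: a linear subspace of the product `H × H`. -/
abbrev LinRel (H : Type*) [AddCommGroup H] [Module ℂ H] : Type _ := Submodule ℂ (H × H)

namespace LinRel

/-- The relation `A - λ = {(x, y - λ x) : (x,y) ∈ A}`. -/
def shift (A : LinRel H) (lam : ℂ) : LinRel H :=
  A.map ((LinearMap.fst ℂ H H).prod (LinearMap.snd ℂ H H - lam • LinearMap.fst ℂ H H))

/-- The relation `λ A = {(x, λ y) : (x,y) ∈ A}`. -/
def smulRel (lam : ℂ) (A : LinRel H) : LinRel H :=
  A.map ((LinearMap.fst ℂ H H).prod (lam • LinearMap.snd ℂ H H))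

/-- The inverse relation `A⁻¹ = {(y,x) : (x,y) ∈ A}`. -/
def inv (A : LinRel H) : LinRel H :=
  A.map ((LinearMap.snd ℂ H H).prod (LinearMap.fst ℂ H H))

/-- The product (composition) `A B = {(x,y) : ∃ z, (x,z) ∈ B ∧ (z,y) ∈ A}`. -/
def comp (A B : LinRel H) : LinRel H where
  carrier := {p | ∃ z, (p.1, z) ∈ B ∧ (z, p.2) ∈ A}
  zero_mem' := ⟨0, B.zero_mem, A.zero_mem⟩
  add_mem' := by
    rintro p q ⟨z1, h1, h2⟩ ⟨z2, h3, h4⟩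
    exact ⟨z1 + z2, B.add_mem h1 h3, A.add_mem h2 h4⟩
  smul_mem' := by
    rintro c p ⟨z, h1, h2⟩
    exact ⟨c • z, B.smul_mem c h1, A.smul_mem c h2⟩

/-- The identity relation `I = {(x,x) : x ∈ H}`. -/
def idRel : LinRel H := LinearMap.graph (LinearMap.id : H →ₗ[ℂ] H)

/-- Powers: `A⁰ = I` and `Aᵏ = A · Aᵏ⁻¹`. -/
def pow (A : LinRel H) : ℕ → LinRel H
  | 0 => idRel
  | (k+1) => comp A (pow A k)

/-- The kernel `ker A = {x : (x,0) ∈ A}`. -/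
def ker (A : LinRel H) : Submodule ℂ H := A.comap (LinearMap.inl ℂ H H)

/-- The multivalued part `mul A = {y : (0,y) ∈ A}`. -/
def mul (A : LinRel H) : Submodule ℂ H := A.comap (LinearMap.inr ℂ H H)

lemma mem_ker {A : LinRel H} {x : H} : x ∈ ker A ↔ (x, (0:H)) ∈ A := by
  simp [ker, Submodule.mem_comap]

lemma mem_mul {A : LinRel H} {y : H} : y ∈ mul A ↔ ((0:H), y) ∈ A := by
  simp [mul, Submodule.mem_comap]

lemma ker_pow_le_succ (A : LinRel H) (i : ℕ) : ker (pow A i) ≤ ker (pow A (i+1)) := by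
  intro x hx
  rw [mem_ker] at hx ⊢
  exact ⟨0, hx, A.zero_mem⟩

lemma ker_pow_mono (A : LinRel H) : Monotone fun i => ker (pow A i) :=
  monotone_nat_of_le_succ (ker_pow_le_succ A)

lemma mul_pow_le_succ (A : LinRel H) : ∀ i, mul (pow A i) ≤ mul (pow A (i+1)) := by
  intro i
  induction i with
  | zero =>
    intro y hy
    rw [mem_mul] at hy ⊢
    have : y = 0 := by simpa [pow, idRel, LinearMap.mem_graph_iff] using hy
    subst this
    exact Submodule.zero_mem _
  | succ i ih =>
    intro y hy
    rw [mem_mul] at hy ⊢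
    obtain ⟨w, hw, hwy⟩ := hy
    exact ⟨w, mem_mul.mp (ih (mem_mul.mpr hw)), hwy⟩

lemma mul_pow_mono (A : LinRel H) : Monotone fun i => mul (pow A i) :=
  monotone_nat_of_le_succ (mul_pow_le_succ A)

/-- The root space `R_λ(A) = ⋃_{i ≥ 1} ker (A - λ)ⁱ`. -/
def rootSpace (A : LinRel H) (lam : ℂ) : Submodule ℂ H where
  carrier := ⋃ i : ℕ, (ker (pow (shift A lam) (i+1)) : Set H)
  zero_mem' := Set.mem_iUnion.2 ⟨0, Submodule.zero_mem _⟩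
  add_mem' := by
    intro a b ha hb
    obtain ⟨i, hi⟩ := Set.mem_iUnion.1 ha
    obtain ⟨j, hj⟩ := Set.mem_iUnion.1 hb
    exact Set.mem_iUnion.2 ⟨max i j, Submodule.add_mem _
      (ker_pow_mono _ (by omega : i + 1 ≤ max i j + 1) hi)
      (ker_pow_mono _ (by omega : j + 1 ≤ max i j + 1) hj)⟩
  smul_mem' := by
    intro c a ha
    obtain ⟨i, hi⟩ := Set.mem_iUnion.1 ha
    exact Set.mem_iUnion.2 ⟨i, Submodule.smul_mem _ c hi⟩

/-- The root space at infinity `R_∞(A) = ⋃_{i ≥ 1} mul Aⁱ`. -/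
def rootInf (A : LinRel H) : Submodule ℂ H where
  carrier := ⋃ i : ℕ, (mul (pow A (i+1)) : Set H)
  zero_mem' := Set.mem_iUnion.2 ⟨0, Submodule.zero_mem _⟩
  add_mem' := by
    intro a b ha hb
    obtain ⟨i, hi⟩ := Set.mem_iUnion.1 ha
    obtain ⟨j, hj⟩ := Set.mem_iUnion.1 hb
    exact Set.mem_iUnion.2 ⟨max i j, Submodule.add_mem _
      (mul_pow_mono _ (by omega : i + 1 ≤ max i j + 1) hi)
      (mul_pow_mono _ (by omega : j + 1 ≤ max i j + 1) hj)⟩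
  smul_mem' := by
    intro c a ha
    obtain ⟨i, hi⟩ := Set.mem_iUnion.1 ha
    exact Set.mem_iUnion.2 ⟨i, Submodule.smul_mem _ c hi⟩

/-- The singular chain space `R_c(A) = R_0(A) ∩ R_∞(A)`. -/
def singChain (A : LinRel H) : Submodule ℂ H := rootSpace A 0 ⊓ rootInf A

/-- The root space at a point of `ℂ ∪ {∞}` (modelled as `Option ℂ`, with `none = ∞`). -/
def rootSpaceE (A : LinRel H) : Option ℂ → Submodule ℂ H
  | none => rootInf A
  | some lam => rootSpace A lam

/-- `λ ∈ ℂ ∪ {∞}` is an eigenvalue of `A`. -/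
def isEigenvalue (A : LinRel H) : Option ℂ → Prop
  | none => mul A ≠ ⊥
  | some lam => ker (shift A lam) ≠ ⊥

end LinRel

namespace LinRel

open Polynomial

/-! ### Shifts, powers and root spaces -/

lemma mem_shift {A : LinRel H} {c : ℂ} {x y : H} :
    (x, y) ∈ shift A c ↔ (x, y + c • x) ∈ A := by
  simp only [shift, Submodule.mem_map, Prod.exists, LinearMap.prod_apply, Function.prod_apply,
    LinearMap.fst_apply, LinearMap.sub_apply, LinearMap.snd_apply, LinearMap.smul_apply,
    Prod.mk.injEq]
  constructor
  · rintro ⟨a, b, h, rfl, rfl⟩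
    simpa using h
  · intro h
    exact ⟨x, _, h, rfl, by simp⟩

lemma shift_zero (A : LinRel H) : shift A 0 = A := by
  ext ⟨x, y⟩
  simp [mem_shift]

lemma shift_shift_neg (A : LinRel H) (c : ℂ) : shift (shift A c) (-c) = A := by
  ext ⟨x, y⟩
  simp [mem_shift]

lemma mem_pow_zero {A : LinRel H} {x y : H} : (x, y) ∈ pow A 0 ↔ y = x := by
  simp [pow, idRel, LinearMap.mem_graph_iff]

/-- `Aⁿ · A ⊆ Aⁿ⁺¹`; the definition of powers puts the extra factor on the other side. -/
lemma mem_pow_succ_of_mem {A : LinRel H} {x y : H} (h : (x, y) ∈ A) :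
    ∀ (n : ℕ) {w : H}, (y, w) ∈ pow A n → (x, w) ∈ pow A (n + 1)
  | 0, w, hw => by
    rw [mem_pow_zero] at hw
    subst hw
    exact ⟨x, mem_pow_zero.2 rfl, h⟩
  | n + 1, w, hw => by
    obtain ⟨v, hv, hvw⟩ := hw
    exact ⟨v, mem_pow_succ_of_mem h n hv, hvw⟩

lemma mem_rootSpace {A : LinRel H} {c : ℂ} {x : H} :
    x ∈ rootSpace A c ↔ ∃ i : ℕ, (x, 0) ∈ pow (shift A c) (i + 1) := by
  simp only [← mem_ker]
  exact Set.mem_iUnion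

lemma mem_rootInf {A : LinRel H} {x : H} :
    x ∈ rootInf A ↔ ∃ i : ℕ, (0, x) ∈ pow A (i + 1) := by
  simp only [← mem_mul]
  exact Set.mem_iUnion

lemma mem_rootSpace_of_mem {A : LinRel H} {c : ℂ} {x y : H} (h : (x, y) ∈ shift A c)
    (hy : y ∈ rootSpace A c) : x ∈ rootSpace A c := by
  obtain ⟨i, hi⟩ := mem_rootSpace.1 hy
  exact mem_rootSpace.2 ⟨i + 1, mem_pow_succ_of_mem h _ hi⟩

lemma mul_pow_le_shift (A : LinRel H) (c : ℂ) (n : ℕ) :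
    mul (pow A n) ≤ mul (pow (shift A c) n) := by
  induction n with
  | zero => exact le_rfl
  | succ n ih =>
    intro y hy
    obtain ⟨w, hw, hwy⟩ := mem_mul.1 hy
    have hw' : w ∈ mul (pow (shift A c) n) := ih (mem_mul.2 hw)
    have h1 : y - c • w ∈ mul (pow (shift A c) (n + 1)) :=
      mem_mul.2 ⟨w, mem_mul.1 hw', mem_shift.2 (by simpa using hwy)⟩
    have h2 := Submodule.smul_mem _ c (mul_pow_le_succ _ _ hw')
    simpa using Submodule.add_mem _ h1 h2

/-! ### Chains -/

lemma exists_chain {A : LinRel H} {a : H} :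
    ∀ (n : ℕ) {b : H}, (a, b) ∈ pow A n →
      ∃ f : ℕ → H, f 0 = a ∧ f n = b ∧ ∀ k < n, (f k, f (k + 1)) ∈ A
  | 0, b, h => ⟨fun _ => a, rfl, (mem_pow_zero.1 h).symm, by simp⟩
  | n + 1, b, h => by
    obtain ⟨w, hw, hwb⟩ := h
    obtain ⟨f, h0, hn, hf⟩ := exists_chain n hw
    refine ⟨fun k => if k ≤ n then f k else b, by simpa using h0, by simp, fun k hk => ?_⟩
    rcases Nat.lt_succ_iff_lt_or_eq.1 hk with hk | rfl
    · simpa [hk.le, Nat.succ_le_of_lt hk] using hf k hk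
    · simpa [hn] using hwb

/-- A vector in `mul Aⁿ ∩ ker Aᵐ` lies on an infinite chain that starts at `0` and is eventually
`0`. -/
lemma exists_singular_chain {A : LinRel H} {x : H} {n m : ℕ} (hn : (0, x) ∈ pow A n)
    (hm : (x, 0) ∈ pow A m) :
    ∃ z : ℕ → H, z 0 = 0 ∧ z n = x ∧ (∀ k, n + m ≤ k → z k = 0) ∧
      ∀ k, (z k, z (k + 1)) ∈ A := by
  obtain ⟨f, f0, fn, hf⟩ := exists_chain n hn
  obtain ⟨g, g0, gm, hg⟩ := exists_chain m hm
  refine ⟨fun k => if k ≤ n then f k else if k - n < m then g (k - n) else 0,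
    by simpa using f0, by simpa using fn, fun k hk => ?_, fun k => ?_⟩
  · by_cases h : k ≤ n
    · obtain rfl : m = 0 := by omega
      obtain rfl : k = n := by omega
      simp [fn, ← g0, gm]
    · have : ¬ k - n < m := by omega
      simp [h, this]
  · rcases lt_or_ge k n with h | h
    · simpa [h.le, Nat.succ_le_of_lt h] using hf k h
    · obtain ⟨j, rfl⟩ := Nat.exists_eq_add_of_le h
      -- past position `n` the chain is `g`, continued by zeros
      have key : ∀ j, (if n + j ≤ n then f (n + j) else
          if n + j - n < m then g (n + j - n) else 0) = if j < m then g j else 0 := by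
        intro j
        rcases Nat.eq_zero_or_pos j with rfl | hj
        · rcases Nat.eq_zero_or_pos m with rfl | hm0
          · simp [fn, ← g0, gm]
          · simp [fn, g0, hm0]
        · have : j ≠ 0 := hj.ne'
          simp [this]
      have e : n + j + 1 = n + (j + 1) := rfl
      beta_reduce
      rw [e, key, key]
      by_cases hj : j < m
      · have := hg j hj
        by_cases hj' : j + 1 < m
        · simpa [hj, hj'] using this
        · obtain rfl : j + 1 = m := by omega
          simpa [gm] using this
      · have : ¬ j + 1 < m := by omega
        simp only [hj, this, if_false]
        exact A.zero_mem

/-! ### Polynomials acting on a chain -/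

/-- Evaluation of a polynomial on a sequence of vectors: the linear map with `X ^ k ↦ z k`. -/
noncomputable def evalChain (z : ℕ → H) : ℂ[X] →ₗ[ℂ] H :=
  (Polynomial.basisMonomials ℂ).constr ℂ z

lemma evalChain_X_pow (z : ℕ → H) (k : ℕ) : evalChain z (X ^ k) = z k := by
  have := (Polynomial.basisMonomials ℂ).constr_basis ℂ z k
  rw [coe_basisMonomials] at this
  beta_reduce at this
  rwa [monomial_one_right_eq_X_pow] at this

lemma evalChain_mem {A : LinRel H} {z : ℕ → H} (hz : ∀ k, (z k, z (k + 1)) ∈ A) (p : ℂ[X]) :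
    (evalChain z p, evalChain z (X * p)) ∈ A := by
  induction p using Polynomial.induction_on' with
  | add p q hp hq => simpa [mul_add] using A.add_mem hp hq
  | monomial k a =>
    have e : monomial k a = a • (X : ℂ[X]) ^ k := by
      rw [← C_mul_X_pow_eq_monomial, smul_eq_C_mul]
    have := A.smul_mem a (hz k)
    rw [e, mul_smul_comm, ← pow_succ', map_smul, map_smul, evalChain_X_pow, evalChain_X_pow]
    exact this

lemma evalChain_X_pow_mul {z : ℕ → H} {N : ℕ} (hN : ∀ k, N ≤ k → z k = 0) (q : ℂ[X]) :
    evalChain z (X ^ N * q) = 0 := by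
  induction q using Polynomial.induction_on' with
  | add p q hp hq => simp [mul_add, hp, hq]
  | monomial k a =>
    rw [← C_mul_X_pow_eq_monomial, ← smul_eq_C_mul, mul_smul_comm, ← pow_add, map_smul, evalChain_X_pow,
      hN _ (by omega), smul_zero]

/-- The backward step of the root space, `φ ((X - c) s + const) ∈ rootSpace A c →
φ s ∈ rootSpace A c` with `φ = evalChain z`, iterated `i` times; `r` collects the constants added along the way, as a
combination of powers of `X - c`. -/
lemma mem_of_pow_mul_add_mem {A : LinRel H} {z : ℕ → H} (c : ℂ) (h0 : z 0 = 0)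
    (hz : ∀ k, (z k, z (k + 1)) ∈ A) (p : ℂ[X]) :
    ∀ (i : ℕ) (r : ℂ[X]), r.degree < i →
      evalChain z ((X - C c) ^ i * p + r) ∈ rootSpace A c → evalChain z p ∈ rootSpace A c
  | 0, r, hr, h => by
    have : r = 0 := by simpa using hr
    simpa [this] using h
  | i + 1, r, hr, h => by
    -- divide `r` by `X - c`; the remainder is a constant, which `evalChain z` kills
    have hdiv : C (r.eval c) + (X - C c) * (r /ₘ (X - C c)) = r := by
      rw [← modByMonic_X_sub_C_eq_C_eval]
      exact modByMonic_add_div r _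
    have hC : evalChain z (C (r.eval c)) = 0 := by
      rw [← mul_one (C _), ← smul_eq_C_mul, map_smul, ← pow_zero X, evalChain_X_pow, h0, smul_zero]
    have hdeg : (r /ₘ (X - C c)).degree < i := by
      by_cases hr0 : r = 0
      · simp [hr0]
      · by_cases hq : r /ₘ (X - C c) = 0
        · simp [hq]
        · rw [degree_eq_natDegree hr0] at hr
          rw [degree_eq_natDegree hq]
          have h1 : r.natDegree < i + 1 := by exact_mod_cast hr
          have h2 := natDegree_divByMonic r (monic_X_sub_C c)
          rw [natDegree_X_sub_C] at h2
          have h3 : r.natDegree ≠ 0 := by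
            intro h3
            rw [eq_C_of_natDegree_eq_zero h3] at hq
            exact hq ((divByMonic_eq_zero_iff (monic_X_sub_C c)).2
              (by rw [degree_X_sub_C]; exact degree_C_le.trans_lt (by norm_num)))
          exact_mod_cast (by omega : (r /ₘ (X - C c)).natDegree < i)
    refine mem_of_pow_mul_add_mem c h0 hz p i (r /ₘ (X - C c)) hdeg ?_
    refine mem_rootSpace_of_mem (mem_shift.2 ?_) h
    set s := (X - C c) ^ i * p + r /ₘ (X - C c) with hs
    have e : (X - C c) ^ (i + 1) * p + r = X * s - c • s + C (r.eval c) := by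
      rw [smul_eq_C_mul, hs]
      nth_rewrite 1 [← hdiv]
      ring
    have e' : evalChain z (X * s - c • s + C (r.eval c)) + c • evalChain z s =
        evalChain z (X * s) := by
      rw [map_add, hC, map_sub, map_smul, add_zero, sub_add_cancel]
    rw [e, e']
    exact evalChain_mem hz s

/-- Vectors in `mul Aⁿ ∩ ker Aᵐ` belong to the root space at every `c : ℂ`. -/
lemma mem_rootSpace_of_mem_pow {A : LinRel H} (c : ℂ) {x : H} {n m : ℕ}
    (hn : (0, x) ∈ pow A n) (hm : (x, 0) ∈ pow A m) : x ∈ rootSpace A c := by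
  obtain ⟨z, h0, rfl, hN, hz⟩ := exists_singular_chain hn hm
  rw [← evalChain_X_pow z n]
  have hmon : (X ^ (n + m) : ℂ[X]).Monic := monic_X_pow _
  set P : ℂ[X] := (X - C c) ^ (n + m) * X ^ n with hP
  refine mem_of_pow_mul_add_mem c h0 hz _ (n + m) (-(P %ₘ X ^ (n + m))) ?_ ?_
  · rw [degree_neg]
    simpa using degree_modByMonic_lt P hmon
  · have e : P + -(P %ₘ X ^ (n + m)) = X ^ (n + m) * (P /ₘ X ^ (n + m)) := by
      nth_rewrite 1 [← modByMonic_add_div P (X ^ (n + m))]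
      ring
    rw [e, evalChain_X_pow_mul hN]
    exact Submodule.zero_mem _

end LinRel

/-- `R_c(A) = R_λ(A) ∩ R_∞(A)` for every `λ ∈ ℂ`. -/
theorem statement_9 (A : LinRel H) (lam : ℂ) :
    LinRel.singChain A = LinRel.rootSpace A lam ⊓ LinRel.rootInf A := by
  apply le_antisymm
  · rintro x ⟨hx, hinf⟩
    refine ⟨?_, hinf⟩
    obtain ⟨m, hm⟩ := LinRel.mem_rootSpace.1 hx
    obtain ⟨n, hn⟩ := LinRel.mem_rootInf.1 hinf
    rw [LinRel.shift_zero] at hm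
    exact LinRel.mem_rootSpace_of_mem_pow lam hn hm
  · rintro x ⟨hx, hinf⟩
    refine ⟨?_, hinf⟩
    obtain ⟨m, hm⟩ := LinRel.mem_rootSpace.1 hx
    obtain ⟨n, hn⟩ := LinRel.mem_rootInf.1 hinf
    have hn' := LinRel.mem_mul.1 (LinRel.mul_pow_le_shift A lam _ (LinRel.mem_mul.2 hn))
    obtain ⟨i, hi⟩ := LinRel.mem_rootSpace.1 (LinRel.mem_rootSpace_of_mem_pow (-lam) hn' hm)
    rw [LinRel.shift_shift_neg] at hi
    exact LinRel.mem_rootSpace.2 ⟨i, by rwa [LinRel.shift_zero]⟩
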